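/- Let G = (V,E) be a simple graph on vertex set {1,…,n} with n ≥ 2, and fix γ ∈ (0,1]. Then G contains a Hamiltonian path starting at vertex 1 and ending at vertex n if and only if there exists a search path w = (w_0,…,w_{n−1}) of length n−1 in G starting at vertex 1 whose discounted reward satisfies F(w) ≥ B. (This is the correctness of the polynomial-time reduction from 2HP underlying the NP-hardness of MESPP even for a grid graph, a stationary target, and a single searcher with perfect sensing.) -/

import Mathlib

/-- The initial target-location belief of the 2HP reduction on vertices `1, …, n`:
`b(1) = 0`, `b(n) = 1/(n−1)²`, and `b(v) = c := 1/(n−1) + 1/(n−1)²` otherwise. -/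
noncomputable def bfun (n : ℕ) (v : ℕ) : ℝ :=
  if v = 1 then 0
  else if v = n then 1 / ((n : ℝ) - 1) ^ 2
  else 1 / ((n : ℝ) - 1) + 1 / ((n : ℝ) - 1) ^ 2

/-- The discounted reward of a searcher trajectory `w₀, …, w_{n−1}`:
`F(w) = Σ_{t=0}^{n−1} γᵗ Σ_{v ∈ {w₀,…,w_t}} b(v)`, each distinct visited vertex
counted once. -/
noncomputable def reward (n : ℕ) (γ : ℝ) (b : ℕ → ℝ) (w : ℕ → ℕ) : ℝ :=
  ∑ t ∈ Finset.range n, γ ^ t * ∑ v ∈ Finset.image w (Finset.range (t + 1)), b v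

/-- The bound value `B = Σ_{t=0}^{n−2} γᵗ·t·c + γ^{n−1}·((n−2)·c + 1/(n−1)²)`. -/
noncomputable def Bval (n : ℕ) (γ : ℝ) : ℝ :=
  (∑ t ∈ Finset.range (n - 1),
      γ ^ t * t * (1 / ((n : ℝ) - 1) + 1 / ((n : ℝ) - 1) ^ 2)) +
    γ ^ (n - 1) *
      (((n : ℝ) - 2) * (1 / ((n : ℝ) - 1) + 1 / ((n : ℝ) - 1) ^ 2) +
        1 / ((n : ℝ) - 1) ^ 2)

/-!
By time `t` the searcher has seen at most `t` vertices besides the start, each worth at most `c`,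
and in total it can collect at most the weight of the whole vertex set. So `B` is the sum of the
largest conceivable instantaneous rewards, and reaching it forces equality at every time. Equality
before the last step means that `n`, the one vertex worth strictly less than `c`, has not been seen
yet; equality at the last step means that all `n` vertices have been seen. A walk with `n` entries
that sees `n` vertices never repeats one, so it never waits.
-/

open Finset

section Visited

variable {V : Type*} [DecidableEq V]

/-- The set of the first `k` vertices `w 0, …, w (k - 1)` of a trajectory `w`; the vertices seen up
to and including time `t` are `visited w (t + 1)`. -/
def visited (w : ℕ → V) (k : ℕ) : Finset V :=
  (range k).image w

theorem mem_visited {w : ℕ → V} {k : ℕ} {v : V} : v ∈ visited w k ↔ ∃ t < k, w t = v := by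
  simp only [visited, mem_image, mem_range]

theorem mem_visited_of_lt (w : ℕ → V) {k t : ℕ} (ht : t < k) : w t ∈ visited w k :=
  mem_visited.2 ⟨t, ht, rfl⟩

theorem visited_subset_iff {w : ℕ → V} {k : ℕ} {S : Finset V} :
    visited w k ⊆ S ↔ ∀ t < k, w t ∈ S := by
  simp only [visited, image_subset_iff, mem_range]

theorem card_visited_le (w : ℕ → V) (k : ℕ) : #(visited w k) ≤ k :=
  card_image_le.trans_eq (card_range k)

theorem card_visited_eq_iff {w : ℕ → V} {k : ℕ} :
    #(visited w k) = k ↔ ∀ s < k, ∀ t < k, w s = w t → s = t := by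
  have h : #(visited w k) = #(range k) ↔ Set.InjOn w (range k) := card_image_iff
  simpa [Set.InjOn] using h

theorem card_visited_of_le {w : ℕ → V} {k l : ℕ} (hkl : k ≤ l) (hl : #(visited w l) = l) :
    #(visited w k) = k :=
  card_visited_eq_iff.2 fun s hs t ht =>
    card_visited_eq_iff.1 hl s (hs.trans_le hkl) t (ht.trans_le hkl)

theorem visited_eq_and_notMem_iff {w : ℕ → V} {k : ℕ} {S : Finset V} {z : V}
    (hS : #S = k + 1) (hz : z ∈ S) :
    visited w (k + 1) = S ∧ z ∉ visited w k ↔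
      w k = z ∧ (∀ s < k + 1, ∀ t < k + 1, w s = w t → s = t) ∧ ∀ v ∈ S, ∃ t < k + 1, w t = v := by
  constructor
  · rintro ⟨rfl, hzk⟩
    obtain ⟨t, ht, rfl⟩ := mem_visited.1 hz
    have htk : t = k := by
      by_contra hne
      exact hzk (mem_visited_of_lt w (by omega))
    exact ⟨htk ▸ rfl, card_visited_eq_iff.1 hS, fun v => mem_visited.1⟩
  · rintro ⟨rfl, hinj, hcover⟩
    have hsub : S ⊆ visited w (k + 1) := fun v hv => mem_visited.2 (hcover v hv)
    refine ⟨(eq_of_subset_of_card_le hsub (hS ▸ card_visited_le w (k + 1))).symm, fun hmem => ?_⟩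
    obtain ⟨t, ht, hwt⟩ := mem_visited.1 hmem
    exact ht.ne (hinj t (by omega) k (by omega) hwt)

end Visited

section EndpointWeight

variable {V R : Type*} [DecidableEq V]

/-- The vertex weights of the reduction, for a start `a`, an end `z` and arbitrary values: `0` at
`a`, `e` at `z`, and `c` at every other vertex. -/
def endpointWeight [Zero R] (a z : V) (c e : R) (v : V) : R :=
  if v = a then 0 else if v = z then e else c

variable {a z : V} {c e : R}

theorem endpointWeight_nonneg [Zero R] [Preorder R] (hc : 0 ≤ c) (he : 0 ≤ e) (v : V) :
    0 ≤ endpointWeight a z c e v := by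
  unfold endpointWeight
  split_ifs <;> first | rfl | assumption

theorem endpointWeight_pos [Zero R] [Preorder R] (hc : 0 < c) (he : 0 < e) {v : V} (hv : v ≠ a) :
    0 < endpointWeight a z c e v := by
  rw [endpointWeight, if_neg hv]
  split_ifs <;> assumption

variable [CommRing R] {A : Finset V}

theorem sum_endpointWeight (haz : a ≠ z) (ha : a ∈ A) :
    ∑ v ∈ A, endpointWeight a z c e v = (#A - 1) * c - if z ∈ A then c - e else 0 := by
  have hweight (v : V) :
      endpointWeight a z c e v = c - (if v = a then c else 0) - if v = z then c - e else 0 := by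
    unfold endpointWeight
    grind
  simp only [hweight, sum_sub_distrib, sum_const, nsmul_eq_mul, sum_ite_eq', if_pos ha]
  ring

variable [LinearOrder R] [IsStrictOrderedRing R]

theorem sum_endpointWeight_le_sub (haz : a ≠ z) (hc : 0 ≤ c) (ha : a ∈ A) {k : ℕ}
    (hA : #A ≤ k + 1) :
    ∑ v ∈ A, endpointWeight a z c e v ≤ k * c - if z ∈ A then c - e else 0 := by
  have hcard : (#A : R) - 1 ≤ k := sub_le_iff_le_add.2 (mod_cast hA)
  rw [sum_endpointWeight haz ha]
  gcongr

theorem sum_endpointWeight_le (haz : a ≠ z) (hc : 0 ≤ c) (hec : e ≤ c) (ha : a ∈ A) {k : ℕ}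
    (hA : #A ≤ k + 1) : ∑ v ∈ A, endpointWeight a z c e v ≤ k * c := by
  refine (sum_endpointWeight_le_sub haz hc ha hA).trans (sub_le_self _ ?_)
  split_ifs
  exacts [sub_nonneg.2 hec, le_rfl]

theorem notMem_of_le_sum_endpointWeight (haz : a ≠ z) (hc : 0 ≤ c) (hec : e < c) (ha : a ∈ A)
    {k : ℕ} (hA : #A ≤ k + 1) (hsum : k * c ≤ ∑ v ∈ A, endpointWeight a z c e v) : z ∉ A := by
  intro hz
  have hle := hsum.trans (sum_endpointWeight_le_sub haz hc ha hA)
  rw [if_pos hz] at hle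
  linarith

theorem sum_endpointWeight_le_of_subset (hc : 0 ≤ c) (he : 0 ≤ e) {S : Finset V} (hAS : A ⊆ S) :
    ∑ v ∈ A, endpointWeight a z c e v ≤ ∑ v ∈ S, endpointWeight a z c e v :=
  sum_le_sum_of_subset_of_nonneg hAS fun v _ _ => endpointWeight_nonneg hc he v

theorem eq_of_sum_endpointWeight_le (hc : 0 < c) (he : 0 < e) (ha : a ∈ A) {S : Finset V}
    (hAS : A ⊆ S)
    (hsum : ∑ v ∈ S, endpointWeight a z c e v ≤ ∑ v ∈ A, endpointWeight a z c e v) : A = S := by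
  by_contra hne
  obtain ⟨v, hvS, hvA⟩ := exists_of_ssubset (hAS.ssubset_of_ne hne)
  have hva : v ≠ a := fun h => hvA (h ▸ ha)
  exact hsum.not_gt <| sum_lt_sum_of_subset hAS hvS hvA (endpointWeight_pos hc he hva)
    fun u _ _ => endpointWeight_nonneg hc.le he.le u

end EndpointWeight

section Reward

variable {V R : Type*} [DecidableEq V] [CommRing R]

/-- The reward of the trajectory `w 0, …, w (n - 1)` for vertex weights `b`, where what has been
collected by time `t` is discounted by `d t`. -/
def discountedReward (n : ℕ) (d : ℕ → R) (b : V → R) (w : ℕ → V) : R :=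
  ∑ t ∈ range n, d t * ∑ v ∈ visited w (t + 1), b v

/-- The reward of a Hamiltonian path on `n` vertices, for discounts `d` and weights
`endpointWeight a z c e` with `a` and `z` the ends of the path. -/
def hamiltonianReward (n : ℕ) (d : ℕ → R) (c e : R) : R :=
  ∑ t ∈ range (n - 1), d t * t * c + d (n - 1) * (((n : R) - 2) * c + e)

variable {S : Finset V} {a z : V} {d : ℕ → R} {c e : R} {w : ℕ → V} {k : ℕ}

theorem hamiltonianReward_succ (haz : a ≠ z) (haS : a ∈ S) (hzS : z ∈ S) (hS : #S = k + 1) :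
    hamiltonianReward (k + 1) d c e =
      ∑ t ∈ range k, d t * (t * c) + d k * ∑ v ∈ S, endpointWeight a z c e v := by
  simp only [hamiltonianReward, Nat.add_sub_cancel, mul_assoc,
    sum_endpointWeight haz haS, if_pos hzS, hS]
  ring

theorem discountedReward_eq_hamiltonianReward (haz : a ≠ z) (haS : a ∈ S) (hzS : z ∈ S)
    (hS : #S = k + 1) (hw0 : w 0 = a) (hall : visited w (k + 1) = S) (hz : z ∉ visited w k) :
    discountedReward (k + 1) d (endpointWeight a z c e) w = hamiltonianReward (k + 1) d c e := by
  have hcollected {t : ℕ} (ht : t < k) :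
      ∑ v ∈ visited w (t + 1), endpointWeight a z c e v = t * c := by
    have hzt : z ∉ visited w (t + 1) := fun h =>
      hz (visited_subset_iff.2 (fun s hs => mem_visited_of_lt w (by omega)) h)
    rw [sum_endpointWeight haz (hw0 ▸ mem_visited_of_lt w t.succ_pos), if_neg hzt,
      card_visited_of_le (by omega) (hall ▸ hS)]
    push_cast
    ring
  rw [hamiltonianReward_succ haz haS hzS hS, discountedReward, sum_range_succ, hall]
  congr 1
  exact sum_congr rfl fun t ht => by rw [hcollected (mem_range.1 ht)]

variable [LinearOrder R] [IsStrictOrderedRing R]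

theorem visited_eq_and_notMem_of_hamiltonianReward_le (haz : a ≠ z) (hzS : z ∈ S)
    (hd : ∀ t, 0 < d t) (he : 0 < e) (hec : e < c) (hS : #S = k + 1) (hw0 : w 0 = a)
    (hwS : visited w (k + 1) ⊆ S)
    (hreward : hamiltonianReward (k + 1) d c e ≤
      discountedReward (k + 1) d (endpointWeight a z c e) w) :
    visited w (k + 1) = S ∧ z ∉ visited w k := by
  have hc : 0 < c := he.trans hec
  have ha (t : ℕ) : a ∈ visited w (t + 1) := hw0 ▸ mem_visited_of_lt w t.succ_pos
  have hbefore : ∀ t ∈ range k,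
      d t * ∑ v ∈ visited w (t + 1), endpointWeight a z c e v ≤ d t * (t * c) := fun t _ =>
    mul_le_mul_of_nonneg_left
      (sum_endpointWeight_le haz hc.le hec.le (ha t) (card_visited_le w _)) (hd t).le
  have hlast : d k * ∑ v ∈ visited w (k + 1), endpointWeight a z c e v ≤
      d k * ∑ v ∈ S, endpointWeight a z c e v :=
    mul_le_mul_of_nonneg_left (sum_endpointWeight_le_of_subset hc.le he.le hwS) (hd k).le
  rw [hamiltonianReward_succ haz (hwS (ha k)) hzS hS, discountedReward, sum_range_succ] at hreward
  have hsum := sum_le_sum hbefore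
  constructor
  · have hlast_ge : d k * ∑ v ∈ S, endpointWeight a z c e v ≤
        d k * ∑ v ∈ visited w (k + 1), endpointWeight a z c e v := by linarith
    exact eq_of_sum_endpointWeight_le hc he (ha k) hwS (le_of_mul_le_mul_left hlast_ge (hd k))
  · intro hz
    obtain ⟨t, htk, rfl⟩ := mem_visited.1 hz
    have hattained := (sum_eq_sum_iff_of_le hbefore).1 (by linarith) t (mem_range.2 htk)
    exact notMem_of_le_sum_endpointWeight haz hc.le hec (ha t) (card_visited_le w _)
      (le_of_mul_le_mul_left hattained.ge (hd t)) (mem_visited_of_lt w t.lt_succ_self)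

theorem hamiltonianReward_le_discountedReward_iff (haz : a ≠ z) (hzS : z ∈ S)
    (hd : ∀ t, 0 < d t) (he : 0 < e) (hec : e < c) (hS : #S = k + 1) (hw0 : w 0 = a)
    (hwS : visited w (k + 1) ⊆ S) :
    hamiltonianReward (k + 1) d c e ≤ discountedReward (k + 1) d (endpointWeight a z c e) w ↔
      visited w (k + 1) = S ∧ z ∉ visited w k :=
  ⟨visited_eq_and_notMem_of_hamiltonianReward_le haz hzS hd he hec hS hw0 hwS, fun ⟨hall, hz⟩ =>
    (discountedReward_eq_hamiltonianReward haz (hwS (hw0 ▸ mem_visited_of_lt w k.succ_pos)) hzS hS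
      hw0 hall hz).ge⟩

theorem twoHP_reduces_to_MESPP_general {n : ℕ} (hS : #S = n) (haz : a ≠ z) (hzS : z ∈ S)
    (hd : ∀ t, 0 < d t) (he : 0 < e) (hec : e < c) (r : V → V → Prop) :
    (∃ p : ℕ → V,
        p 0 = a ∧ p (n - 1) = z ∧
        (∀ t < n - 1, r (p t) (p (t + 1))) ∧
        (∀ s < n, ∀ t < n, p s = p t → s = t) ∧
        (∀ v ∈ S, ∃ t < n, p t = v)) ↔
    (∃ w : ℕ → V,
        (∀ t < n, w t ∈ S) ∧
        w 0 = a ∧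
        (∀ t < n - 1, w (t + 1) = w t ∨ r (w t) (w (t + 1))) ∧
        hamiltonianReward n d c e ≤ discountedReward n d (endpointWeight a z c e) w) := by
  obtain ⟨k, rfl⟩ : ∃ k, n = k + 1 := Nat.exists_eq_succ_of_ne_zero (hS ▸ card_ne_zero_of_mem hzS)
  simp only [Nat.add_sub_cancel, ← visited_subset_iff]
  constructor
  · rintro ⟨p, hp0, hpk, hstep, hinj, hcover⟩
    have hvisited := (visited_eq_and_notMem_iff hS hzS).2 ⟨hpk, hinj, hcover⟩
    have hpS : visited p (k + 1) ⊆ S := hvisited.1.subset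
    exact ⟨p, hpS, hp0, fun t ht => .inr (hstep t ht),
      (hamiltonianReward_le_discountedReward_iff haz hzS hd he hec hS hp0 hpS).2 hvisited⟩
  · rintro ⟨w, hwS, hw0, hstep, hreward⟩
    have hvisited :=
      (hamiltonianReward_le_discountedReward_iff haz hzS hd he hec hS hw0 hwS).1 hreward
    obtain ⟨hwk, hinj, hcover⟩ := (visited_eq_and_notMem_iff hS hzS).1 hvisited
    have hmoves (t : ℕ) (ht : t < k) : w (t + 1) ≠ w t := fun h =>
      t.succ_ne_self (hinj (t + 1) (by omega) t (by omega) h)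
    exact ⟨w, hw0, hwk, fun t ht => (hstep t ht).resolve_left (hmoves t ht), hinj, hcover⟩

end Reward

/-- Correctness of the reduction from 2HP to MESPP-D: a simple graph on vertex set
`{1, …, n}` contains a Hamiltonian path from vertex `1` to vertex `n` iff there is a
search path of length `n−1` starting at vertex `1` (at each step the searcher stays
put or moves along an edge) whose discounted reward is at least `B`. -/
theorem twoHP_reduces_to_MESPP (n : ℕ) (hn : 2 ≤ n)
    (γ : ℝ) (hγ : γ ∈ Set.Ioc (0 : ℝ) 1)
    (G : SimpleGraph ℕ)
    (hG : ∀ u v : ℕ, G.Adj u v → u ∈ Finset.Icc 1 n ∧ v ∈ Finset.Icc 1 n) :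
    (∃ p : ℕ → ℕ,
        p 0 = 1 ∧ p (n - 1) = n ∧
        (∀ t < n - 1, G.Adj (p t) (p (t + 1))) ∧
        (∀ s < n, ∀ t < n, p s = p t → s = t) ∧
        (∀ v ∈ Finset.Icc 1 n, ∃ t < n, p t = v)) ↔
    (∃ w : ℕ → ℕ,
        (∀ t < n, w t ∈ Finset.Icc 1 n) ∧
        w 0 = 1 ∧
        (∀ t < n - 1, w (t + 1) = w t ∨ G.Adj (w t) (w (t + 1))) ∧
        Bval n γ ≤ reward n γ (bfun n) w) := by
  have hn1 : (0 : ℝ) < n - 1 := sub_pos.2 (mod_cast hn)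
  exact twoHP_reduces_to_MESPP_general (d := (γ ^ ·)) (Nat.card_Icc 1 n) (by omega)
    (right_mem_Icc.2 (by omega)) (fun t => pow_pos hγ.1 t) (by positivity)
    (lt_add_of_pos_left _ (by positivity)) G.Adj
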